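/- Fix integers d,e ≥ 1 and let ~C^{d,e}_n denote the largest cardinality of an equivalence class of the relation 't ~ t' iff ld(t) ~^d ld(t') and rd(t) ~^e rd(t')' on T_n. If 0 ≤ n < d+e then ~C^{d,e}_n = 1. If n ≥ d+e then ~C^{d,e}_n = C_{n+2−d−e}, and the number of equivalence classes of this maximal cardinality equals binom(d+e−2, d−1). -/

import Mathlib

/-- Full binary trees (every internal node has exactly two children). -/
inductive BTree : Type
  | leaf : BTree
  | node : BTree → BTree → BTree
deriving DecidableEq

namespace BTree

/-- Number of leaves of a full binary tree. -/
def numLeaves : BTree → ℕ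
  | leaf => 1
  | node l r => l.numLeaves + r.numLeaves

/-- The list of pairs (left depth, right depth) of the leaves, in preorder. -/
def leafDepths : BTree → List (ℕ × ℕ)
  | leaf => [(0, 0)]
  | node l r =>
      (l.leafDepths.map fun p => (p.1 + 1, p.2)) ++ (r.leafDepths.map fun p => (p.1, p.2 + 1))

/-- The left depth sequence `ld(t)` of the leaves of `t`, in preorder. -/
def ld (t : BTree) : List ℕ := t.leafDepths.map Prod.fst

/-- The right depth sequence `rd(t)` of the leaves of `t`, in preorder. -/
def rd (t : BTree) : List ℕ := t.leafDepths.map Prod.snd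

end BTree

/-- `b ~^d c` : the sequences have equal length and agree at every position where
either entry is `< d`. -/
def DepthEq (d : ℕ) : List ℕ → List ℕ → Prop :=
  List.Forall₂ (fun a b => min a b < d → a = b)

/-- `b ~_k c` : entrywise congruence mod `k` (and equal length). -/
def ModListEq (k : ℕ) : List ℕ → List ℕ → Prop :=
  List.Forall₂ (fun a b => a % k = b % k)

/-- The relation `t ~ t'` iff `ld(t) ~^d ld(t')` and `rd(t) ~^e rd(t')`. -/
def DeRel (d e : ℕ) (t t' : BTree) : Prop :=
  DepthEq d t.ld t'.ld ∧ DepthEq e t.rd t'.rd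

/-- The relation `t ~ t'` iff `ld(t) ~_k^d ld(t')` (i.e. `ld(t) ~_k ld(t')` and
`ld(t) ~^d ld(t')`). -/
def DkRel (d k : ℕ) (t t' : BTree) : Prop :=
  ModListEq k t.ld t'.ld ∧ DepthEq d t.ld t'.ld

/-- `T_n`: full binary trees with `n+1` leaves. -/
def Tn (n : ℕ) : Type := {t : BTree // t.numLeaves = n + 1}

/-- `C^{d,e}_n`: the number of equivalence classes of the relation `DeRel d e` on `T_n`. -/
noncomputable def Cde (d e n : ℕ) : ℕ :=
  Nat.card (Quot (fun t t' : Tn n => DeRel d e t.1 t'.1))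

/-- `C^d_{k,n}`: the number of equivalence classes of `ld(t) ~_k^d ld(t')` on `T_n`. -/
noncomputable def Cdk (d k n : ℕ) : ℕ :=
  Nat.card (Quot (fun t t' : Tn n => DkRel d k t.1 t'.1))

/-- The size of an equivalence class (given as an element of the quotient of `T_n` by the
relation `DeRel d e`). -/
noncomputable def classSize (d e n : ℕ)
    (q : Quot (fun t t' : Tn n => DeRel d e t.1 t'.1)) : ℕ :=
  Nat.card {t : Tn n // Quot.mk (fun t t' : Tn n => DeRel d e t.1 t'.1) t = q}

/-- `~C^{d,e}_n`: the largest cardinality of an equivalence class of `DeRel d e` on `T_n`. -/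
noncomputable def tCde (d e n : ℕ) : ℕ := sSup (Set.range (classSize d e n))

namespace BTree

/-- number of internal nodes -/
def size : BTree → ℕ
  | leaf => 0
  | node l r => l.size + r.size + 1

/-- right comb -/
def rcomb : ℕ → BTree
  | 0 => leaf
  | k + 1 => node leaf (rcomb k)

/-- canonical representative of the class of a tree for `DeRel (a+1) (b+1)` -/
def rep : BTree → ℕ → ℕ → BTree
  | leaf, _, _ => leaf
  | node l r, a, b =>
    if a = 0 ∧ b = 0 then rcomb (l.size + r.size + 1)
    else node (l.rep (a - 1) b) (r.rep a (b - 1))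

/-- size of the class of a tree for `DeRel (a+1) (b+1)` -/
noncomputable def csz : BTree → ℕ → ℕ → ℕ
  | leaf, _, _ => 1
  | node l r, a, b =>
    if a = 0 ∧ b = 0 then catalan (l.size + r.size + 1)
    else l.csz (a - 1) b * r.csz a (b - 1)

/-- representatives of the maximal classes -/
def mx (k : ℕ) : ℕ → ℕ → Finset BTree
  | 0, 0 => {rcomb k}
  | 0, b + 1 => (mx k 0 b).image (fun r => node leaf r)
  | a + 1, 0 => (mx k a 0).image (fun l => node l leaf)
  | a + 1, b + 1 => (mx k a (b + 1)).image (fun l => node l leaf) ∪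
      (mx k (a + 1) b).image (fun r => node leaf r)

theorem numLeaves_eq (t : BTree) : t.numLeaves = t.size + 1 := by
  induction t with
  | leaf => rfl
  | node l r hl hr => simp only [numLeaves, size]; omega

theorem length_leafDepths (t : BTree) : t.leafDepths.length = t.size + 1 := by
  induction t with
  | leaf => rfl
  | node l r hl hr => simp only [leafDepths, size, List.length_append, List.length_map]; omega

theorem length_ld (t : BTree) : t.ld.length = t.size + 1 := by
  simp [ld, length_leafDepths]

theorem length_rd (t : BTree) : t.rd.length = t.size + 1 := by
  simp [rd, length_leafDepths]

theorem size_rcomb (k : ℕ) : (rcomb k).size = k := by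
  induction k with
  | zero => rfl
  | succ k ih => simp only [rcomb, size]; omega

theorem size_rep (t : BTree) (a b : ℕ) : (t.rep a b).size = t.size := by
  induction t generalizing a b with
  | leaf => rfl
  | node l r hl hr =>
    simp only [rep]
    split_ifs
    · rw [size_rcomb]; rfl
    · simp only [size, hl, hr]

theorem size_eq_zero {t : BTree} : t.size = 0 ↔ t = leaf := by
  cases t <;> simp [size]

theorem rep_zero (t : BTree) : t.rep 0 0 = rcomb t.size := by
  cases t <;> simp [rep, size, rcomb]

theorem ld_node (l r : BTree) : (node l r).ld = l.ld.map (· + 1) ++ r.ld := by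
  simp [ld, leafDepths, Function.comp_def]

theorem rd_node (l r : BTree) : (node l r).rd = l.rd ++ r.rd.map (· + 1) := by
  simp [rd, leafDepths, Function.comp_def]

theorem ld_form (t : BTree) : ∃ L : List ℕ, t.ld = L.map (· + 1) ++ [0] := by
  induction t with
  | leaf => exact ⟨[], rfl⟩
  | node l r hl hr =>
    obtain ⟨R, hR⟩ := hr
    exact ⟨l.ld ++ R, by rw [ld_node, hR]; simp⟩

theorem rd_form (t : BTree) : ∃ L : List ℕ, t.rd = 0 :: L.map (· + 1) := by
  induction t with
  | leaf => exact ⟨[], rfl⟩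
  | node l r hl hr =>
    obtain ⟨L, hL⟩ := hl
    exact ⟨L ++ r.rd, by rw [rd_node, hL]; simp⟩

end BTree

open BTree

theorem depthEq_length {d : ℕ} {x y : List ℕ} (h : DepthEq d x y) : x.length = y.length :=
  List.Forall₂.length_eq h

theorem depthEq_mono {d d' : ℕ} (hd : d ≤ d') {x y : List ℕ} (h : DepthEq d' x y) :
    DepthEq d x y :=
  List.Forall₂.imp (fun _ _ h1 h2 => h1 (lt_of_lt_of_le h2 hd)) h

theorem depthEq_zero {x y : List ℕ} : DepthEq 0 x y ↔ x.length = y.length := by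
  constructor
  · exact depthEq_length
  · intro h
    refine List.forall₂_iff_get.2 ⟨h, ?_⟩
    intro i h1 h2 h3
    omega

theorem depthEq_map {d : ℕ} {x y : List ℕ} :
    DepthEq d (x.map (· + 1)) (y.map (· + 1)) ↔ DepthEq (d - 1) x y := by
  unfold DepthEq
  rw [List.forall₂_map_left_iff, List.forall₂_map_right_iff]
  have : (fun a c : ℕ => min (a + 1) (c + 1) < d → a + 1 = c + 1) =
      (fun a c : ℕ => min a c < d - 1 → a = c) := by
    funext a c
    apply propext
    constructor
    · intro h h1
      have := h (by omega)
      omega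
    · intro h h1
      have := h (by omega)
      omega
  rw [this]

theorem depthEq_append {d : ℕ} {x y x' y' : List ℕ} (h : x.length = x'.length) :
    DepthEq d (x ++ y) (x' ++ y') ↔ DepthEq d x x' ∧ DepthEq d y y' := by
  unfold DepthEq
  induction x generalizing x' with
  | nil =>
    cases x' with
    | nil => simp
    | cons c cs => simp at h
  | cons c cs ih =>
    cases x' with
    | nil => simp at h
    | cons c' cs' =>
      simp only [List.length_cons, Nat.add_right_cancel_iff] at h
      simp only [List.cons_append, List.forall₂_cons, ih h, and_assoc]

theorem depthEq_one_ld (t t' : BTree) : DepthEq 1 t.ld t'.ld ↔ DepthEq 0 t.ld t'.ld := by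
  refine ⟨depthEq_mono (by omega), fun h => ?_⟩
  have h := depthEq_zero.1 h
  obtain ⟨L, hL⟩ := ld_form t
  obtain ⟨L', hL'⟩ := ld_form t'
  rw [hL, hL'] at h ⊢
  simp only [List.length_append, List.length_map, List.length_cons, List.length_nil] at h
  rw [depthEq_append (by simp; omega), depthEq_map, depthEq_zero]
  refine ⟨by omega, ?_⟩
  exact List.Forall₂.cons (fun _ => rfl) List.Forall₂.nil

theorem depthEq_one_rd (t t' : BTree) : DepthEq 1 t.rd t'.rd ↔ DepthEq 0 t.rd t'.rd := by
  refine ⟨depthEq_mono (by omega), fun h => ?_⟩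
  have h := depthEq_zero.1 h
  obtain ⟨L, hL⟩ := rd_form t
  obtain ⟨L', hL'⟩ := rd_form t'
  rw [hL, hL'] at h ⊢
  simp only [List.length_map, List.length_cons] at h
  refine List.Forall₂.cons (fun _ => rfl) ?_
  have : DepthEq 1 (L.map (· + 1)) (L'.map (· + 1)) := by
    rw [depthEq_map, depthEq_zero]; omega
  exact this

theorem depthEq_ld_pred (a : ℕ) (t t' : BTree) :
    DepthEq a t.ld t'.ld ↔ DepthEq (a - 1 + 1) t.ld t'.ld := by
  cases a with
  | zero => exact (depthEq_one_ld t t').symm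
  | succ a => rfl

theorem depthEq_rd_pred (a : ℕ) (t t' : BTree) :
    DepthEq a t.rd t'.rd ↔ DepthEq (a - 1 + 1) t.rd t'.rd := by
  cases a with
  | zero => exact (depthEq_one_rd t t').symm
  | succ a => rfl

theorem split_aux (A A' B B' : List ℕ)
    (h : DepthEq 2 (A.map (· + 2) ++ 1 :: B) (A'.map (· + 2) ++ 1 :: B')) :
    A.length = A'.length := by
  unfold DepthEq at h
  induction A generalizing A' with
  | nil =>
    cases A' with
    | nil => rfl
    | cons c cs =>
      simp at h
  | cons c cs ih =>
    cases A' with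
    | nil =>
      simp at h
    | cons c' cs' =>
      simp only [List.map_cons, List.cons_append, List.forall₂_cons] at h
      simp [ih cs' h.2]

theorem split_ld {l r l' r' : BTree} (h : DepthEq 2 (node l r).ld (node l' r').ld) :
    l.size = l'.size := by
  obtain ⟨L, hL⟩ := ld_form l
  obtain ⟨L', hL'⟩ := ld_form l'
  have e1 := length_ld l
  have e2 := length_ld l'
  rw [ld_node, ld_node, hL, hL'] at h
  rw [hL] at e1
  rw [hL'] at e2
  simp only [List.length_append, List.length_map, List.length_cons, List.length_nil] at e1 e2
  have := split_aux L L' r.ld r'.ld (by simpa using h)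
  omega

theorem split_rd {l r l' r' : BTree} (h : DepthEq 2 (node l r).rd (node l' r').rd) :
    r.size = r'.size := by
  obtain ⟨L, hL⟩ := rd_form r
  obtain ⟨L', hL'⟩ := rd_form r'
  have e1 := length_rd r
  have e2 := length_rd r'
  rw [rd_node, rd_node, hL, hL'] at h
  rw [hL] at e1
  rw [hL'] at e2
  simp only [List.length_map, List.length_cons] at e1 e2
  have h' := List.forall₂_reverse_iff.2 h
  have := split_aux L.reverse L'.reverse l.rd.reverse l'.rd.reverse (by simpa [DepthEq] using h')
  simp only [List.length_reverse] at this
  omega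

theorem deRel_size {d e : ℕ} {t t' : BTree} (h : DeRel d e t t') : t.size = t'.size := by
  have := depthEq_length h.1
  rw [length_ld, length_ld] at this
  omega

theorem deRel_one {t t' : BTree} : DeRel 1 1 t t' ↔ t.size = t'.size := by
  refine ⟨deRel_size, fun h => ⟨?_, ?_⟩⟩
  · rw [depthEq_one_ld, depthEq_zero, length_ld, length_ld, h]
  · rw [depthEq_one_rd, depthEq_zero, length_rd, length_rd, h]

theorem deRel_node {a b : ℕ} (hab : ¬ (a = 0 ∧ b = 0)) (l r l' r' : BTree) :
    DeRel (a + 1) (b + 1) (node l r) (node l' r') ↔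
      DeRel (a - 1 + 1) (b + 1) l l' ∧ DeRel (a + 1) (b - 1 + 1) r r' := by
  have key : l.size = l'.size → (DeRel (a + 1) (b + 1) (node l r) (node l' r') ↔
      DeRel (a - 1 + 1) (b + 1) l l' ∧ DeRel (a + 1) (b - 1 + 1) r r') := by
    intro hs
    unfold DeRel
    rw [ld_node, ld_node, rd_node, rd_node,
      depthEq_append (by simp [length_ld, hs]), depthEq_append (by simp [length_rd, hs]),
      depthEq_map, depthEq_map, ← depthEq_ld_pred a, ← depthEq_rd_pred b]
    simp only [Nat.add_sub_cancel]
    tauto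
  constructor
  · intro h
    refine (key ?_).1 h
    by_cases ha : a = 0
    · have h2 := split_rd (depthEq_mono (by omega) h.2)
      have h3 := deRel_size h
      simp only [size] at h3
      omega
    · exact split_ld (depthEq_mono (by omega) h.1)
  · intro h
    exact (key (deRel_size h.1)).2 h

theorem deRel_iff_rep (a b : ℕ) (t t' : BTree) :
    DeRel (a + 1) (b + 1) t t' ↔ t.rep a b = t'.rep a b := by
  induction t generalizing a b t' with
  | leaf =>
    constructor
    · intro h
      have := deRel_size h
      rw [size_eq_zero.1 this.symm]
    · intro h
      have h2 := congrArg size h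
      rw [size_rep, size_rep] at h2
      rw [size_eq_zero.1 h2.symm]
      exact ⟨List.forall₂_same.2 (fun _ _ _ => rfl), List.forall₂_same.2 (fun _ _ _ => rfl)⟩
  | node l r hl hr =>
    by_cases hab : a = 0 ∧ b = 0
    · obtain ⟨rfl, rfl⟩ := hab
      rw [rep_zero, rep_zero]
      refine deRel_one.trans ⟨fun h => by rw [h], fun h => ?_⟩
      have := congrArg size h
      rwa [size_rcomb, size_rcomb] at this
    · cases t' with
      | leaf =>
        constructor
        · intro h
          have := deRel_size h
          simp [size] at this
        · intro h
          have h2 := congrArg size h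
          rw [size_rep, size_rep] at h2
          simp [size] at h2
      | node l' r' =>
        rw [deRel_node hab, hl, hr]
        simp only [rep, if_neg hab, node.injEq]

/-- equivalence with Mathlib's trees -/
def toT : BTree → BinaryTree Unit
  | leaf => .nil
  | node l r => .node () (toT l) (toT r)

/-- inverse -/
def ofT : BinaryTree Unit → BTree
  | .nil => leaf
  | .node _ l r => node (ofT l) (ofT r)

/-- the equivalence -/
def eqT : BTree ≃ BinaryTree Unit where
  toFun := toT
  invFun := ofT
  left_inv t := by induction t <;> simp_all [toT, ofT]
  right_inv t := by induction t <;> simp_all [toT, ofT]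

theorem numNodes_toT (t : BTree) : (toT t).numNodes = t.size := by
  induction t <;> simp_all [toT, size, BinaryTree.numNodes]

theorem card_size (k : ℕ) : Nat.card {t : BTree // t.size = k} = catalan k := by
  rw [← BinaryTree.treesOfNumNodesEq_card_eq_catalan, ← Nat.card_eq_finsetCard]
  refine Nat.card_congr (eqT.subtypeEquiv fun t => ?_)
  rw [BinaryTree.mem_treesOfNumNodesEq]
  exact (numNodes_toT t).symm ▸ Iff.rfl

theorem card_rep (a b : ℕ) (t : BTree) :
    Nat.card {t' : BTree // t'.rep a b = t.rep a b} = t.csz a b := by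
  induction t generalizing a b with
  | leaf =>
    have : ∀ t' : BTree, t'.rep a b = leaf.rep a b ↔ t' = leaf := by
      intro t'
      refine ⟨fun h => ?_, fun h => by rw [h]⟩
      have h2 := congrArg size h
      rw [size_rep, size_rep] at h2
      exact size_eq_zero.1 h2
    simp only [this, csz]
    simp
  | node l r hl hr =>
    by_cases hab : a = 0 ∧ b = 0
    · obtain ⟨rfl, rfl⟩ := hab
      have : ∀ t' : BTree, t'.rep 0 0 = (node l r).rep 0 0 ↔ t'.size = l.size + r.size + 1 := by
        intro t'
        rw [rep_zero, rep_zero]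
        refine ⟨fun h => ?_, fun h => by rw [h]; rfl⟩
        have h2 := congrArg size h
        rw [size_rcomb, size_rcomb] at h2
        exact h2
      simp only [this, csz, and_self, if_true]
      exact card_size _
    · simp only [csz, if_neg hab]
      rw [← hl, ← hr, ← Nat.card_prod]
      refine Nat.card_congr ⟨fun t' => ?_, fun p => ⟨node p.1.1 p.2.1, ?_⟩, ?_, ?_⟩
      · match t' with
        | ⟨leaf, h⟩ =>
          exact absurd h (by simp [rep, if_neg hab])
        | ⟨node l' r', h⟩ =>
          have h' : l'.rep (a - 1) b = l.rep (a - 1) b ∧ r'.rep a (b - 1) = r.rep a (b - 1) := by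
            simpa only [rep, if_neg hab, node.injEq] using h
          exact (⟨l', h'.1⟩, ⟨r', h'.2⟩)
      · simp only [rep, if_neg hab, node.injEq]
        exact ⟨p.1.2, p.2.2⟩
      · rintro ⟨t', h⟩
        cases t' with
        | leaf => exact absurd h (by simp [rep, if_neg hab])
        | node l' r' => rfl
      · rintro ⟨⟨p, hp⟩, ⟨q, hq⟩⟩
        rfl

theorem catalan_pos' (k : ℕ) : 0 < catalan k := by
  have := succ_mul_catalan_eq_centralBinom k
  have h2 := Nat.centralBinom_pos k
  rcases Nat.eq_zero_or_pos (catalan k) with h | h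
  · rw [h] at this; omega
  · exact h

theorem catalan_succ_range (n : ℕ) :
    catalan (n + 1) = ∑ i ∈ Finset.range (n + 1), catalan i * catalan (n - i) := by
  rw [catalan_succ, Finset.sum_range]

theorem catalan_mul_le (i j : ℕ) : catalan i * catalan j ≤ catalan (i + j) := by
  induction i using Nat.strong_induction_on with
  | _ i ih =>
    cases i with
    | zero => simp
    | succ i =>
      rw [show i + 1 + j = (i + j) + 1 by ring, catalan_succ_range, catalan_succ_range,
        Finset.sum_mul]
      calc _ ≤ ∑ p ∈ Finset.range (i + 1), catalan p * catalan (i + j - p) := by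
            refine Finset.sum_le_sum fun p hp => ?_
            have hp := Finset.mem_range.1 hp
            rw [mul_assoc, show i + j - p = (i - p) + j by omega]
            exact Nat.mul_le_mul_left _ (ih _ (by omega))
        _ ≤ _ := Finset.sum_le_sum_of_subset (Finset.range_mono (by omega))

theorem catalan_mul_lt (i j : ℕ) : catalan (i + 1) * catalan (j + 1) < catalan (i + 1 + (j + 1)) := by
  rw [show i + 1 + (j + 1) = (i + (j + 1)) + 1 by ring, catalan_succ_range i,
    catalan_succ_range (i + (j + 1)), Finset.sum_mul]
  calc _ ≤ ∑ p ∈ Finset.range (i + 1), catalan p * catalan (i + (j + 1) - p) := by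
        refine Finset.sum_le_sum fun p hp => ?_
        have hp := Finset.mem_range.1 hp
        rw [mul_assoc, show i + (j + 1) - p = (i - p) + (j + 1) by omega]
        exact Nat.mul_le_mul_left _ (catalan_mul_le _ _)
    _ < _ := by
        refine Finset.sum_lt_sum_of_subset (i := i + 1) (Finset.range_mono (by omega)) ?_ ?_ ?_ ?_
        · simp
        · simp
        · exact Nat.mul_pos (catalan_pos' _) (catalan_pos' _)
        · intros; exact Nat.zero_le _

theorem catalan_mono : Monotone catalan := by
  refine monotone_nat_of_le_succ fun k => ?_
  simpa using catalan_mul_le k 1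

theorem catalan_lt {i k : ℕ} (h : i < k) (hk : 2 ≤ k) : catalan i < catalan k := by
  obtain ⟨m, rfl⟩ : ∃ m, k = m + 1 + 1 := ⟨k - 2, by omega⟩
  have h1 : catalan (m + 1) < catalan (m + 1 + 1) := by simpa using catalan_mul_lt m 0
  exact lt_of_le_of_lt (catalan_mono (by omega)) h1

theorem catalan_mul_eq {i j k : ℕ} (hk : 2 ≤ k) (hij : i + j ≤ k)
    (h : catalan i * catalan j = catalan k) : i + j = k ∧ (i = 0 ∨ j = 0) := by
  have h1 : i + j = k := by
    by_contra hne
    have := catalan_lt (lt_of_le_of_ne hij hne) hk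
    have := catalan_mul_le i j
    omega
  refine ⟨h1, ?_⟩
  by_contra hc
  push Not at hc
  obtain ⟨i, rfl⟩ := Nat.exists_eq_succ_of_ne_zero hc.1
  obtain ⟨j, rfl⟩ := Nat.exists_eq_succ_of_ne_zero hc.2
  have := catalan_mul_lt i j
  rw [← h1] at h
  simp only [Nat.succ_eq_add_one] at h
  omega

theorem csz_pos (t : BTree) (a b : ℕ) : 0 < t.csz a b := by
  induction t generalizing a b with
  | leaf => simp [csz]
  | node l r hl hr =>
    simp only [csz]
    split_ifs
    · exact catalan_pos' _
    · exact Nat.mul_pos (hl _ _) (hr _ _)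

theorem csz_le (t : BTree) (a b : ℕ) : t.csz a b ≤ catalan (t.size - (a + b)) := by
  induction t generalizing a b with
  | leaf => simp [csz, size]
  | node l r hl hr =>
    simp only [csz]
    split_ifs with hab
    · simp [hab.1, hab.2, size]
    · calc _ ≤ _ := Nat.mul_le_mul (hl _ _) (hr _ _)
        _ ≤ _ := catalan_mul_le _ _
        _ ≤ _ := catalan_mono (by simp only [size]; omega)

theorem csz_node_max {l r : BTree} {a b k : ℕ} (hk : 2 ≤ k) (hab : ¬ (a = 0 ∧ b = 0))
    (hs : l.size + r.size + 1 = a + b + k) :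
    (l.csz (a - 1) b * r.csz a (b - 1) = catalan k) ↔
      ((l = leaf ∧ 1 ≤ b ∧ r.csz a (b - 1) = catalan k) ∨
       (r = leaf ∧ 1 ≤ a ∧ l.csz (a - 1) b = catalan k)) := by
  constructor
  · intro h
    have h1 := csz_le l (a - 1) b
    have h2 := csz_le r a (b - 1)
    have h3 := catalan_mul_le (l.size - (a - 1 + b)) (r.size - (a + (b - 1)))
    have hij : (l.size - (a - 1 + b)) + (r.size - (a + (b - 1))) ≤ k := by omega
    have h4 := catalan_mono hij
    have h5 := Nat.mul_le_mul h1 h2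
    obtain ⟨h6, h7⟩ := catalan_mul_eq hk hij (by omega)
    have hlr : (l.size = 0 ∧ 1 ≤ b) ∨ (r.size = 0 ∧ 1 ≤ a) := by omega
    rcases hlr with ⟨h8, h9⟩ | ⟨h8, h9⟩
    · left
      have := size_eq_zero.1 h8
      subst this
      exact ⟨rfl, h9, by simpa [csz] using h⟩
    · right
      have := size_eq_zero.1 h8
      subst this
      exact ⟨rfl, h9, by simpa [csz] using h⟩
  · rintro (⟨rfl, _, h⟩ | ⟨rfl, _, h⟩)
    · simpa [csz] using h
    · simpa [csz] using h

theorem rep_eq_leaf {t : BTree} {a b : ℕ} : t.rep a b = leaf ↔ t = leaf := by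
  rw [← size_eq_zero, size_rep, size_eq_zero]

theorem csz_max {k : ℕ} (hk : 2 ≤ k) (t : BTree) (a b : ℕ) (hs : t.size = a + b + k) :
    t.csz a b = catalan k ↔ t.rep a b ∈ mx k a b := by
  induction t generalizing a b with
  | leaf => simp only [size] at hs; omega
  | node l r hl hr =>
    simp only [size] at hs
    by_cases hab : a = 0 ∧ b = 0
    · obtain ⟨rfl, rfl⟩ := hab
      simp only [csz, rep, mx, and_self, if_true]
      rw [hs]
      simp
    · simp only [csz, rep, if_neg hab]
      rw [csz_node_max hk hab hs]
      have hL : l = leaf → 1 ≤ b →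
          (r.csz a (b - 1) = catalan k ↔ r.rep a (b - 1) ∈ mx k a (b - 1)) := by
        rintro rfl h; exact hr _ _ (by simp only [size] at hs; omega)
      have hR : r = leaf → 1 ≤ a →
          (l.csz (a - 1) b = catalan k ↔ l.rep (a - 1) b ∈ mx k (a - 1) b) := by
        rintro rfl h; exact hl _ _ (by simp only [size] at hs; omega)
      match a, b with
      | 0, 0 => simp at hab
      | 0, b + 1 =>
        simp only [mx, Finset.mem_image, node.injEq]
        constructor
        · rintro (⟨h1, h2, h3⟩ | ⟨h1, h2, h3⟩)
          · exact ⟨_, (hL h1 h2).1 h3, (rep_eq_leaf.2 h1).symm, rfl⟩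
          · omega
        · rintro ⟨x, hx, h1, h2⟩
          have h1 := rep_eq_leaf.1 h1.symm
          exact Or.inl ⟨h1, by omega, (hL h1 (by omega)).2 (h2 ▸ hx)⟩
      | a + 1, 0 =>
        simp only [mx, Finset.mem_image, node.injEq]
        constructor
        · rintro (⟨h1, h2, h3⟩ | ⟨h1, h2, h3⟩)
          · omega
          · exact ⟨_, (hR h1 h2).1 h3, rfl, (rep_eq_leaf.2 h1).symm⟩
        · rintro ⟨x, hx, h2, h1⟩
          have h1 := rep_eq_leaf.1 h1.symm
          exact Or.inr ⟨h1, by omega, (hR h1 (by omega)).2 (h2 ▸ hx)⟩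
      | a + 1, b + 1 =>
        simp only [mx, Finset.mem_image, Finset.mem_union, node.injEq]
        constructor
        · rintro (⟨h1, h2, h3⟩ | ⟨h1, h2, h3⟩)
          · exact Or.inr ⟨_, (hL h1 h2).1 h3, (rep_eq_leaf.2 h1).symm, rfl⟩
          · exact Or.inl ⟨_, (hR h1 h2).1 h3, rfl, (rep_eq_leaf.2 h1).symm⟩
        · rintro (⟨x, hx, h2, h1⟩ | ⟨x, hx, h1, h2⟩)
          · have h1 := rep_eq_leaf.1 h1.symm
            exact Or.inr ⟨h1, by omega, (hR h1 (by omega)).2 (h2 ▸ hx)⟩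
          · have h1 := rep_eq_leaf.1 h1.symm
            exact Or.inl ⟨h1, by omega, (hL h1 (by omega)).2 (h2 ▸ hx)⟩

theorem mx_spec (k a b : ℕ) : ∀ x ∈ mx k a b, x.size = a + b + k ∧ x.rep a b = x := by
  fun_induction mx k a b with
  | case1 => simp [size_rcomb, rep_zero]
  | case2 b ih =>
    intro x hx
    obtain ⟨y, hy, rfl⟩ := Finset.mem_image.1 hx
    have := ih y hy
    refine ⟨by simp only [size]; omega, ?_⟩
    simp [rep, this.2]
  | case3 a ih =>
    intro x hx
    obtain ⟨y, hy, rfl⟩ := Finset.mem_image.1 hx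
    have := ih y hy
    refine ⟨by simp only [size]; omega, ?_⟩
    simp [rep, this.2]
  | case4 a b ih1 ih2 =>
    intro x hx
    rcases Finset.mem_union.1 hx with hx | hx
    · obtain ⟨y, hy, rfl⟩ := Finset.mem_image.1 hx
      have := ih1 y hy
      refine ⟨by simp only [size]; omega, ?_⟩
      simp [rep, this.2]
    · obtain ⟨y, hy, rfl⟩ := Finset.mem_image.1 hx
      have := ih2 y hy
      refine ⟨by simp only [size]; omega, ?_⟩
      simp [rep, this.2]

theorem mx_card {k : ℕ} (hk : 2 ≤ k) (a b : ℕ) : (mx k a b).card = (a + b).choose a := by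
  have i1 : Function.Injective (fun l => node l leaf) := fun x y h => by simpa using h
  have i2 : Function.Injective (fun r => node leaf r) := fun x y h => by simpa using h
  fun_induction mx k a b with
  | case1 => simp
  | case2 b ih => rw [Finset.card_image_of_injective _ i2, ih]; simp
  | case3 a ih => rw [Finset.card_image_of_injective _ i1, ih]; simp
  | case4 a b ih1 ih2 =>
    rw [Finset.card_union_of_disjoint, Finset.card_image_of_injective _ i1,
      Finset.card_image_of_injective _ i2, ih1, ih2]
    · rw [show a + 1 + (b + 1) = (a + b + 1) + 1 by ring, Nat.choose_succ_succ,
        show a + (b + 1) = a + b + 1 by ring, show a + 1 + b = a + b + 1 by ring]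
    · rw [Finset.disjoint_left]
      intro x hx hy
      obtain ⟨y, hy1, rfl⟩ := Finset.mem_image.1 hx
      obtain ⟨z, hz1, h⟩ := Finset.mem_image.1 hy
      simp only [node.injEq] at h
      have := (mx_spec _ _ _ z hz1).1
      rw [h.2] at this
      simp only [size] at this
      omega

/-- the quotient -/
abbrev QQ (a b n : ℕ) : Type := Quot (fun t t' : Tn n => DeRel (a + 1) (b + 1) t.1 t'.1)

/-- the representative of a class -/
def qrep (a b n : ℕ) : QQ a b n → BTree :=
  Quot.lift (fun t => t.1.rep a b) (fun _ _ h => (deRel_iff_rep _ _ _ _).1 h)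

theorem qrep_inj (a b n : ℕ) : Function.Injective (qrep a b n) := by
  rintro ⟨x⟩ ⟨y⟩ h
  exact Quot.sound ((deRel_iff_rep _ _ _ _).2 h)

theorem tn_size {n : ℕ} (t : Tn n) : t.1.size = n := by
  have := t.2
  rw [numLeaves_eq] at this
  omega

theorem classSize_eq (a b n : ℕ) (t : Tn n) :
    classSize (a + 1) (b + 1) n (Quot.mk _ t) = t.1.csz a b := by
  rw [← card_rep]
  refine Nat.card_congr ⟨fun x => ⟨x.1.1, congrArg (qrep a b n) x.2⟩,
    fun x => ⟨⟨x.1, ?_⟩, ?_⟩, fun _ => rfl, fun _ => rfl⟩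
  · have := congrArg size x.2
    rw [size_rep, size_rep, tn_size] at this
    rw [numLeaves_eq, this]
  · exact qrep_inj a b n x.2

theorem tCde_eq (a b n m : ℕ) (hle : ∀ t : Tn n, t.1.csz a b ≤ m)
    (hex : ∃ t : Tn n, t.1.csz a b = m) : tCde (a + 1) (b + 1) n = m := by
  obtain ⟨t, ht⟩ := hex
  refine IsGreatest.csSup_eq ⟨⟨Quot.mk _ t, by rw [classSize_eq, ht]⟩, ?_⟩
  rintro _ ⟨⟨t⟩, rfl⟩
  exact (classSize_eq a b n t).trans_le (hle t)


/-- for `d,e ≥ 1`: if `n < d + e` then `~C^{d,e}_n = 1`; if `n ≥ d + e` then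
`~C^{d,e}_n = C_{n+2-d-e}` and the number of classes of this maximal cardinality is
`binom(d+e-2, d-1)`. -/
theorem stmt2 (d e n : ℕ) (hd : 1 ≤ d) (he : 1 ≤ e) :
    (n < d + e → tCde d e n = 1) ∧
    (d + e ≤ n → tCde d e n = catalan (n + 2 - d - e) ∧
      Nat.card {q : Quot (fun t t' : Tn n => DeRel d e t.1 t'.1) //
          classSize d e n q = tCde d e n} = (d + e - 2).choose (d - 1)) := by
  obtain ⟨a, rfl⟩ : ∃ a, d = a + 1 := ⟨d - 1, by omega⟩
  obtain ⟨b, rfl⟩ : ∃ b, e = b + 1 := ⟨e - 1, by omega⟩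
  constructor
  · intro hn
    have hle : ∀ t : Tn n, t.1.csz a b ≤ 1 := by
      intro t
      have h1 := csz_le t.1 a b
      rw [tn_size] at h1
      have h2 : catalan (n - (a + b)) ≤ catalan 1 := catalan_mono (by omega)
      rw [catalan_one] at h2
      omega
    refine tCde_eq a b n 1 hle ?_
    let t : Tn n := ⟨rcomb n, by rw [numLeaves_eq, size_rcomb]⟩
    exact ⟨t, le_antisymm (hle t) (csz_pos _ _ _)⟩
  · intro hn
    obtain ⟨k, rfl⟩ : ∃ k, n = a + b + k := ⟨n - (a + b), by omega⟩
    have hk : 2 ≤ k := by omega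
    rw [show a + b + k + 2 - (a + 1) - (b + 1) = k by omega]
    have hmem : ∀ x ∈ mx k a b, ∃ t : Tn (a + b + k), t.1 = x ∧ t.1.csz a b = catalan k := by
      intro x hx
      have h := mx_spec k a b x hx
      refine ⟨⟨x, by rw [numLeaves_eq, h.1]⟩, rfl, ?_⟩
      refine (csz_max hk x a b h.1).2 ?_
      rw [h.2]
      exact hx
    have hmax : tCde (a + 1) (b + 1) (a + b + k) = catalan k := by
      refine tCde_eq a b _ _ (fun t => ?_) ?_
      · have h1 := csz_le t.1 a b
        rw [tn_size] at h1
        rwa [Nat.add_sub_cancel_left] at h1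
      · have hpos : 0 < (mx k a b).card := by
          rw [mx_card hk]
          exact Nat.choose_pos (by omega)
        obtain ⟨x, hx⟩ := Finset.card_pos.1 hpos
        obtain ⟨t, _, ht⟩ := hmem x hx
        exact ⟨t, ht⟩
    refine ⟨hmax, ?_⟩
    rw [hmax, show a + 1 + (b + 1) - 2 = a + b by omega, Nat.add_sub_cancel, ← mx_card hk,
      ← Nat.card_eq_finsetCard]
    have hq : ∀ q : QQ a b (a + b + k), classSize (a + 1) (b + 1) (a + b + k) q = catalan k ↔
        qrep a b _ q ∈ mx k a b := by
      rintro ⟨t⟩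
      exact (Eq.congr_left (classSize_eq a b _ t)).trans (csz_max hk t.1 a b (tn_size t))
    refine Nat.card_congr (Equiv.ofBijective
      (fun q => (⟨qrep a b _ q.1, (hq q.1).1 q.2⟩ : {x // x ∈ mx k a b})) ⟨?_, ?_⟩)
    · intro q q' h
      exact Subtype.ext (qrep_inj a b _ (congrArg Subtype.val h))
    · rintro ⟨x, hx⟩
      obtain ⟨t, ht, hc⟩ := hmem x hx
      refine ⟨⟨Quot.mk _ t, (classSize_eq a b _ t).trans hc⟩, Subtype.ext ?_⟩
      change t.1.rep a b = x
      rw [ht]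
      exact (mx_spec k a b x hx).2
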